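/- Let 𝒳 = 𝒳₁ × ⋯ × 𝒳ₙ ⊆ ℝⁿ be a product of n intervals (a box), and let f : [0,∞) × 𝒳 → ℝⁿ be continuous, Lipschitz continuous in its second argument uniformly in the first on compact sets, and such that x ↦ f(t,x) is type K on 𝒳 for each t ≥ 0. Suppose there is a map φ : [0,∞) × 𝒳 → 𝒳 such that for every ξ ∈ 𝒳, φ(0,ξ) = ξ and t ↦ φ(t,ξ) is differentiable with ∂_t φ(t,ξ) = f(t, φ(t,ξ)) for all t ≥ 0. Then there exists β ∈ 𝒦ℒ with |φ(t,ξ¹) − φ(t,ξ²)|₁ ≤ β(|ξ¹ − ξ²|₁, t) for all ξ¹, ξ² ∈ 𝒳 and all t ≥ 0 (incremental asymptotic stability with respect to 𝒳) if and only if there exists β ∈ 𝒦ℒ such that for every pair ξ¹, ξ² ∈ 𝒳 with ξ¹ ≤ ξ² componentwise and every t ≥ 0, ∑_{i=1}^n (φ_i(t,ξ²) − φ_i(t,ξ¹)) ≤ β(∑_{i=1}^n (ξ²_i − ξ¹_i), t). -/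

import Mathlib

open Finset

/-- A map `h` is type K on `D ⊆ ℝⁿ` if `h_i a ≤ h_i b` whenever `a, b ∈ D`
satisfy `a ≤ b` componentwise and `a_i = b_i`. -/
def IsTypeKOn {n : ℕ} (h : (Fin n → ℝ) → (Fin n → ℝ)) (D : Set (Fin n → ℝ)) : Prop :=
  ∀ a ∈ D, ∀ b ∈ D, a ≤ b → ∀ i, a i = b i → h a i ≤ h b i

/-- The `1`-norm `|x|₁ = ∑ i, |x i|` on `ℝⁿ`. -/
def onenorm {n : ℕ} (x : Fin n → ℝ) : ℝ := ∑ i, |x i|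

/-- The class `𝒦ℒ` of comparison functions: `β : [0,∞) × [0,∞) → [0,∞)` is
continuous, `β 0 t = 0`, `r ↦ β r t` is strictly increasing for each fixed `t`,
and `β r t → 0` as `t → ∞` for each fixed `r`. -/
def IsKL (β : ℝ → ℝ → ℝ) : Prop :=
  ContinuousOn (fun p : ℝ × ℝ => β p.1 p.2) (Set.Ici 0 ×ˢ Set.Ici 0) ∧
  (∀ r ∈ Set.Ici (0 : ℝ), ∀ t ∈ Set.Ici (0 : ℝ), 0 ≤ β r t) ∧
  (∀ t ∈ Set.Ici (0 : ℝ), β 0 t = 0) ∧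
  (∀ t ∈ Set.Ici (0 : ℝ), StrictMonoOn (fun r => β r t) (Set.Ici 0)) ∧
  (∀ r ∈ Set.Ici (0 : ℝ), Filter.Tendsto (fun t => β r t) Filter.atTop (nhds 0))

/-!
The comparison principle is a Grönwall argument for `V(t) = ∑ i, ((x_i(t) - y_i(t))⁺)²`, where `x`
is a subsolution and `y` a supersolution: if `x_i ≥ y_i` then `x` and `x ⊔ y` agree in coordinate
`i`, so the type K condition gives `f_i(t, x) ≤ f_i(t, x ⊔ y)`, and the Lipschitz condition bounds
`f_i(t, x ⊔ y) - f_i(t, y)` in terms of `x ⊔ y - y = (x - y)⁺`. Hence the flow preserves order.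

Solutions starting at `ξ₁` and `ξ₂` therefore stay between those starting at `ξ₁ ⊓ ξ₂` and
`ξ₁ ⊔ ξ₂`, whose initial distance is exactly `|ξ₁ - ξ₂|₁`. Thus an estimate for ordered pairs
extends to all pairs with the same `β`.
-/

open scoped NNReal

theorem hasDerivAt_posPart_sq (s : ℝ) : HasDerivAt (fun u : ℝ => u⁺ ^ 2) (2 * s⁺) s := by
  have remainder (u : ℝ) : ‖u⁺ ^ 2 - s⁺ ^ 2 - (u - s) * (2 * s⁺)‖ ≤ 1 * ‖‖u - s‖ ^ 2‖ := by
    simp only [Real.norm_eq_abs, abs_pow, sq_abs, one_mul, abs_le]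
    rcases le_total 0 u with hu | hu <;> rcases le_total 0 s with hs | hs <;>
      simp only [posPart_of_nonneg, posPart_of_nonpos, hu, hs] <;> constructor <;> nlinarith
  rw [hasDerivAt_iff_isLittleO]
  exact (Asymptotics.IsBigO.of_bound 1 (.of_forall remainder)).trans_isLittleO
    (Asymptotics.isLittleO_pow_sub_sub s one_lt_two)

theorem norm_sq_le_sum_sq {ι : Type*} [Fintype ι] (a : ι → ℝ) : ‖a‖ ^ 2 ≤ ∑ i, a i ^ 2 := by
  have sum_nonneg : 0 ≤ ∑ i, a i ^ 2 := Finset.sum_nonneg fun i _ => sq_nonneg (a i)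
  rw [← Real.le_sqrt (norm_nonneg a) sum_nonneg, pi_norm_le_iff_of_nonneg (Real.sqrt_nonneg _)]
  exact fun i => Real.abs_le_sqrt <|
    Finset.single_le_sum (fun j _ => sq_nonneg (a j)) (Finset.mem_univ i)

theorem isSublattice_setOf_forall_mem {ι : Type*} {α : ι → Type*} [∀ i, LinearOrder (α i)]
    (X : ∀ i, Set (α i)) : IsSublattice {x : ∀ i, α i | ∀ i, x i ∈ X i} := by
  simpa only [Set.pi, Set.mem_univ, true_imp_iff] using
    isSublattice_pi (s := Set.univ) fun i _ => LinearOrder.isSublattice (X i)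

theorem nonpos_of_deriv_right_le_mul {v v' : ℝ → ℝ} {C a b : ℝ}
    (hv : ContinuousOn v (Set.Icc a b))
    (hv' : ∀ t ∈ Set.Ico a b, HasDerivWithinAt v (v' t) (Set.Ici t) t)
    (ha : v a ≤ 0) (bound : ∀ t ∈ Set.Ico a b, v' t ≤ C * v t) :
    ∀ t ∈ Set.Icc a b, v t ≤ 0 := by
  intro t ht
  rw [← gronwallBound_ε0_δ0 C (t - a)]
  exact le_gronwallBound_of_liminf_deriv_right_le hv
    (fun s hs r hr => (hv' s hs).liminf_right_slope_le hr) ha (by simpa using bound) t ht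

namespace IsTypeKOn

variable {n : ℕ} {D K : Set (Fin n → ℝ)}

theorem sub_apply_le_mul_norm_posPart {h : (Fin n → ℝ) → (Fin n → ℝ)} {L : ℝ≥0} {a b : Fin n → ℝ}
    (hD : IsTypeKOn h D) (hL : LipschitzOnWith L h K) (ha : a ∈ D) (hsupD : a ⊔ b ∈ D)
    (hsupK : a ⊔ b ∈ K) (hb : b ∈ K) {i : Fin n} (hi : b i ≤ a i) :
    h a i - h b i ≤ L * ‖(a - b)⁺‖ :=
  calc h a i - h b i
    _ ≤ h (a ⊔ b) i - h b i :=
      sub_le_sub_right (hD a ha _ hsupD le_sup_left i (sup_eq_left.2 hi).symm) _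
    _ ≤ ‖h (a ⊔ b) - h b‖ := (le_abs_self _).trans (norm_le_pi_norm (h (a ⊔ b) - h b) i)
    _ ≤ L * ‖a ⊔ b - b‖ := hL.norm_sub_le hsupK hb
    _ = L * ‖(a - b)⁺‖ := by rw [sup_eq_add_posPart_sub, add_sub_cancel_left]

theorem sum_posPart_mul_sub_le {h : (Fin n → ℝ) → (Fin n → ℝ)} {L : ℝ≥0} {a b : Fin n → ℝ}
    (hD : IsTypeKOn h D) (hL : LipschitzOnWith L h K) (ha : a ∈ D) (hsupD : a ⊔ b ∈ D)
    (hsupK : a ⊔ b ∈ K) (hb : b ∈ K) :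
    ∑ i, (a i - b i)⁺ * (h a i - h b i) ≤ n * L * ∑ i, (a i - b i)⁺ ^ 2 := by
  have term_le (i : Fin n) : (a i - b i)⁺ * (h a i - h b i) ≤ L * ‖(a - b)⁺‖ ^ 2 := by
    rcases le_total (a i) (b i) with hi | hi
    · rw [posPart_of_nonpos (sub_nonpos.2 hi), zero_mul]
      positivity
    · have posPart_le : (a i - b i)⁺ ≤ ‖(a - b)⁺‖ :=
        (le_abs_self _).trans (norm_le_pi_norm (a - b)⁺ i)
      calc (a i - b i)⁺ * (h a i - h b i)
        _ ≤ ‖(a - b)⁺‖ * (L * ‖(a - b)⁺‖) :=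
          mul_le_mul_of_nonneg posPart_le
            (hD.sub_apply_le_mul_norm_posPart hL ha hsupD hsupK hb hi)
            (posPart_nonneg _) (by positivity)
        _ = L * ‖(a - b)⁺‖ ^ 2 := by ring
  calc ∑ i, (a i - b i)⁺ * (h a i - h b i)
    _ ≤ ∑ _i : Fin n, L * ‖(a - b)⁺‖ ^ 2 := Finset.sum_le_sum fun i _ => term_le i
    _ = n * L * ‖(a - b)⁺‖ ^ 2 := by simp [mul_assoc]
    _ ≤ n * L * ∑ i, (a i - b i)⁺ ^ 2 := by
      gcongr
      exact norm_sq_le_sum_sq (a - b)⁺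

theorem subsolution_le_supersolution {f : ℝ → (Fin n → ℝ) → (Fin n → ℝ)} {L : ℝ≥0} {a b : ℝ}
    {x y x' y' : ℝ → (Fin n → ℝ)}
    (hf : ∀ t ∈ Set.Ico a b, IsTypeKOn (f t) D)
    (hL : ∀ t ∈ Set.Ico a b, LipschitzOnWith L (f t) K)
    (hxD : ∀ t ∈ Set.Ico a b, x t ∈ D) (hsupD : ∀ t ∈ Set.Ico a b, x t ⊔ y t ∈ D)
    (hsupK : ∀ t ∈ Set.Ico a b, x t ⊔ y t ∈ K) (hyK : ∀ t ∈ Set.Ico a b, y t ∈ K)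
    (hx : ContinuousOn x (Set.Icc a b)) (hy : ContinuousOn y (Set.Icc a b))
    (hx' : ∀ t ∈ Set.Ico a b, HasDerivWithinAt x (x' t) (Set.Ici t) t)
    (hy' : ∀ t ∈ Set.Ico a b, HasDerivWithinAt y (y' t) (Set.Ici t) t)
    (hxf : ∀ t ∈ Set.Ico a b, x' t ≤ f t (x t)) (hyf : ∀ t ∈ Set.Ico a b, f t (y t) ≤ y' t)
    (h₀ : x a ≤ y a) {t : ℝ} (ht : t ∈ Set.Icc a b) : x t ≤ y t := by
  let V : ℝ → ℝ := fun s => ∑ i, (x s i - y s i)⁺ ^ 2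
  let V' : ℝ → ℝ := fun s => ∑ i, 2 * (x s i - y s i)⁺ * (x' s i - y' s i)
  have V_continuousOn : ContinuousOn V (Set.Icc a b) :=
    continuousOn_finsetSum _ fun i _ => (continuous_posPart.comp_continuousOn
      ((continuousOn_pi.1 hx i).sub (continuousOn_pi.1 hy i))).pow 2
  have V_deriv : ∀ s ∈ Set.Ico a b, HasDerivWithinAt V (V' s) (Set.Ici s) s := fun s hs =>
    .fun_sum fun i _ => (hasDerivAt_posPart_sq _).comp_hasDerivWithinAt s
      ((hasDerivWithinAt_pi.1 (hx' s hs) i).sub (hasDerivWithinAt_pi.1 (hy' s hs) i))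
  have V'_le : ∀ s ∈ Set.Ico a b, V' s ≤ 2 * (n * L) * V s := fun s hs =>
    calc V' s
      _ ≤ ∑ i, 2 * (x s i - y s i)⁺ * (f s (x s) i - f s (y s) i) := by
        refine Finset.sum_le_sum fun i _ => mul_le_mul_of_nonneg_left ?_ (by positivity)
        exact sub_le_sub (hxf s hs i) (hyf s hs i)
      _ = 2 * ∑ i, (x s i - y s i)⁺ * (f s (x s) i - f s (y s) i) := by
        simp only [Finset.mul_sum, mul_assoc]
      _ ≤ 2 * (n * L * V s) := by
        gcongr
        exact (hf s hs).sum_posPart_mul_sub_le (hL s hs) (hxD s hs) (hsupD s hs) (hsupK s hs)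
          (hyK s hs)
      _ = 2 * (n * L) * V s := (mul_assoc _ _ _).symm
  have V_initial : V a = 0 := Finset.sum_eq_zero fun i _ => by
    rw [posPart_of_nonpos (sub_nonpos.2 (h₀ i)), zero_pow two_ne_zero]
  have V_nonpos : V t ≤ 0 :=
    nonpos_of_deriv_right_le_mul V_continuousOn V_deriv V_initial.le V'_le t ht
  have V_eq_zero : V t = 0 := V_nonpos.antisymm (Finset.sum_nonneg fun i _ => sq_nonneg _)
  intro i
  have posPart_sq_eq_zero :=
    (Finset.sum_eq_zero_iff_of_nonneg fun j _ => sq_nonneg _).1 V_eq_zero i (Finset.mem_univ i)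
  exact sub_nonpos.1 (posPart_eq_zero.1 (pow_eq_zero_iff two_ne_zero |>.1 posPart_sq_eq_zero))

end IsTypeKOn

section OneNorm

variable {n : ℕ}

theorem onenorm_of_nonneg {x : Fin n → ℝ} (hx : 0 ≤ x) : onenorm x = ∑ i, x i :=
  Finset.sum_congr rfl fun i _ => abs_of_nonneg (hx i)

theorem sum_sup_sub_inf_eq_onenorm (x y : Fin n → ℝ) :
    ∑ i, ((x ⊔ y) i - (x ⊓ y) i) = onenorm (x - y) :=
  Finset.sum_congr rfl fun i _ => (max_sub_min_eq_abs' (x i) (y i))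

theorem onenorm_sub_le_of_mem_Icc {l u x y : Fin n → ℝ} (hx : x ∈ Set.Icc l u)
    (hy : y ∈ Set.Icc l u) : onenorm (x - y) ≤ ∑ i, (u i - l i) :=
  Finset.sum_le_sum fun i _ => abs_sub_le_of_le_of_le (hx.1 i) (hx.2 i) (hy.1 i) (hy.2 i)

theorem onenorm_map_sub_le_iff_of_monotoneOn {D : Set (Fin n → ℝ)} (hD : IsSublattice D)
    {Φ : (Fin n → ℝ) → (Fin n → ℝ)} (hΦ : MonotoneOn Φ D) (γ : ℝ → ℝ) :
    (∀ ξ₁ ∈ D, ∀ ξ₂ ∈ D, onenorm (Φ ξ₁ - Φ ξ₂) ≤ γ (onenorm (ξ₁ - ξ₂))) ↔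
      ∀ ξ₁ ∈ D, ∀ ξ₂ ∈ D, ξ₁ ≤ ξ₂ → ∑ i, (Φ ξ₂ i - Φ ξ₁ i) ≤ γ (∑ i, (ξ₂ i - ξ₁ i)) := by
  constructor
  · intro h ξ₁ h₁ ξ₂ h₂ hle
    have := h ξ₂ h₂ ξ₁ h₁
    rwa [onenorm_of_nonneg (sub_nonneg.2 (hΦ h₁ h₂ hle)),
      onenorm_of_nonneg (sub_nonneg.2 hle)] at this
  · intro h ξ₁ h₁ ξ₂ h₂
    have hinf : ξ₁ ⊓ ξ₂ ∈ D := hD.infClosed h₁ h₂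
    have hsup : ξ₁ ⊔ ξ₂ ∈ D := hD.supClosed h₁ h₂
    calc onenorm (Φ ξ₁ - Φ ξ₂)
      _ ≤ ∑ i, (Φ (ξ₁ ⊔ ξ₂) i - Φ (ξ₁ ⊓ ξ₂) i) := onenorm_sub_le_of_mem_Icc
        ⟨hΦ hinf h₁ inf_le_left, hΦ h₁ hsup le_sup_left⟩
        ⟨hΦ hinf h₂ inf_le_right, hΦ h₂ hsup le_sup_right⟩
      _ ≤ γ (∑ i, ((ξ₁ ⊔ ξ₂) i - (ξ₁ ⊓ ξ₂) i)) := h _ hinf _ hsup inf_le_sup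
      _ = γ (onenorm (ξ₁ - ξ₂)) := by rw [sum_sup_sub_inf_eq_onenorm]

end OneNorm

section Flow

variable {n : ℕ} {D : Set (Fin n → ℝ)} {f φ : ℝ → (Fin n → ℝ) → (Fin n → ℝ)}

theorem monotoneOn_flow_of_isTypeKOn (hD : SupClosed D)
    (hlip : ∀ K ⊆ D, IsCompact K → ∀ T, ∃ L : ℝ≥0, ∀ t ∈ Set.Icc 0 T, LipschitzOnWith L (f t) K)
    (hK : ∀ t ≥ (0 : ℝ), IsTypeKOn (f t) D)
    (hφ : ∀ ξ ∈ D, φ 0 ξ = ξ ∧ ∀ t ≥ (0 : ℝ), φ t ξ ∈ D ∧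
      HasDerivWithinAt (fun s => φ s ξ) (f t (φ t ξ)) (Set.Ici 0) t)
    {T : ℝ} (hT : 0 ≤ T) : MonotoneOn (φ T) D := by
  intro ξ₁ h₁ ξ₂ h₂ hle
  have hcont {ξ} (hξ : ξ ∈ D) : ContinuousOn (fun s => φ s ξ) (Set.Icc 0 T) := fun t ht =>
    ((hφ ξ hξ).2 t ht.1).2.continuousWithinAt.mono Set.Icc_subset_Ici_self
  have hderiv {ξ} (hξ : ξ ∈ D) (t : ℝ) (ht : t ∈ Set.Ico 0 T) :
      HasDerivWithinAt (fun s => φ s ξ) (f t (φ t ξ)) (Set.Ici t) t :=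
    ((hφ ξ hξ).2 t ht.1).2.mono (Set.Ici_subset_Ici.2 ht.1)
  have hmem {ξ} (hξ : ξ ∈ D) {t : ℝ} (ht : 0 ≤ t) : φ t ξ ∈ D := ((hφ ξ hξ).2 t ht).1
  have hsup : ContinuousOn (fun t => φ t ξ₁ ⊔ φ t ξ₂) (Set.Icc 0 T) := continuousOn_pi.2 fun i =>
    (continuousOn_pi.1 (hcont h₁) i).sup (continuousOn_pi.1 (hcont h₂) i)
  let K : Set (Fin n → ℝ) :=
    (fun t => φ t ξ₁ ⊔ φ t ξ₂) '' Set.Icc 0 T ∪ (fun t => φ t ξ₂) '' Set.Icc 0 T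
  have K_compact : IsCompact K :=
    (isCompact_Icc.image_of_continuousOn hsup).union
      (isCompact_Icc.image_of_continuousOn (hcont h₂))
  have K_subset : K ⊆ D := by
    rintro _ (⟨t, ht, rfl⟩ | ⟨t, ht, rfl⟩)
    exacts [hD (hmem h₁ ht.1) (hmem h₂ ht.1), hmem h₂ ht.1]
  obtain ⟨L, hL⟩ := hlip K K_subset K_compact T
  exact IsTypeKOn.subsolution_le_supersolution (fun t ht => hK t ht.1)
    (fun t ht => hL t (Set.Ico_subset_Icc_self ht))
    (fun t ht => hmem h₁ ht.1) (fun t ht => hD (hmem h₁ ht.1) (hmem h₂ ht.1))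
    (fun t ht => .inl ⟨t, Set.Ico_subset_Icc_self ht, rfl⟩)
    (fun t ht => .inr ⟨t, Set.Ico_subset_Icc_self ht, rfl⟩)
    (hcont h₁) (hcont h₂) (hderiv h₁) (hderiv h₂) (fun _ _ => le_rfl) (fun _ _ => le_rfl)
    (by rwa [(hφ ξ₁ h₁).1, (hφ ξ₂ h₂).1]) (Set.right_mem_Icc.2 hT)

theorem stmt10_general (hD : IsSublattice D)
    (hlip : ∀ K ⊆ D, IsCompact K → ∀ T, ∃ L : ℝ≥0, ∀ t ∈ Set.Icc 0 T, LipschitzOnWith L (f t) K)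
    (hK : ∀ t ≥ (0 : ℝ), IsTypeKOn (f t) D)
    (hφ : ∀ ξ ∈ D, φ 0 ξ = ξ ∧ ∀ t ≥ (0 : ℝ), φ t ξ ∈ D ∧
      HasDerivWithinAt (fun s => φ s ξ) (f t (φ t ξ)) (Set.Ici 0) t)
    (β : ℝ → ℝ → ℝ) :
    (∀ ξ₁ ∈ D, ∀ ξ₂ ∈ D, ∀ t ≥ (0 : ℝ),
        onenorm (φ t ξ₁ - φ t ξ₂) ≤ β (onenorm (ξ₁ - ξ₂)) t) ↔
      ∀ ξ₁ ∈ D, ∀ ξ₂ ∈ D, ξ₁ ≤ ξ₂ → ∀ t ≥ (0 : ℝ),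
        ∑ i, (φ t ξ₂ i - φ t ξ₁ i) ≤ β (∑ i, (ξ₂ i - ξ₁ i)) t := by
  have equiv_at (t : ℝ) (ht : 0 ≤ t) := onenorm_map_sub_le_iff_of_monotoneOn hD
    (monotoneOn_flow_of_isTypeKOn hD.supClosed hlip hK hφ ht) (β · t)
  exact ⟨fun h ξ₁ h₁ ξ₂ h₂ hle t ht =>
      (equiv_at t ht).1 (fun η₁ k₁ η₂ k₂ => h η₁ k₁ η₂ k₂ t ht) ξ₁ h₁ ξ₂ h₂ hle,
    fun h ξ₁ h₁ ξ₂ h₂ t ht =>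
      (equiv_at t ht).2 (fun η₁ k₁ η₂ k₂ hle => h η₁ k₁ η₂ k₂ hle t ht) ξ₁ h₁ ξ₂ h₂⟩

end Flow

/-- a system cooperative in a box `𝒳` with flow `φ` is
incrementally asymptotically stable with respect to `𝒳` if and only if there is
a `𝒦ℒ` bound on all pairs of initially ordered solutions. -/
theorem stmt10 (n : ℕ) (hn : 0 < n) (X : Fin n → Set ℝ)
    (hX : ∀ i, (X i).OrdConnected)
    (box : Set (Fin n → ℝ)) (hbox : box = {x : Fin n → ℝ | ∀ i, x i ∈ X i})
    (f : ℝ → (Fin n → ℝ) → (Fin n → ℝ))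
    (hcont : ContinuousOn (fun p : ℝ × (Fin n → ℝ) => f p.1 p.2) (Set.Ici 0 ×ˢ box))
    (hlip : ∀ K ⊆ box, IsCompact K → ∃ L : ℝ, ∀ t ≥ (0 : ℝ), ∀ x ∈ K, ∀ y ∈ K,
      ‖f t x - f t y‖ ≤ L * ‖x - y‖)
    (hK : ∀ t ≥ (0 : ℝ), IsTypeKOn (f t) box)
    (φ : ℝ → (Fin n → ℝ) → (Fin n → ℝ))
    (hφ : ∀ ξ ∈ box, φ 0 ξ = ξ ∧ ∀ t ≥ (0 : ℝ), φ t ξ ∈ box ∧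
      HasDerivAt (fun s => φ s ξ) (f t (φ t ξ)) t) :
    (∃ β : ℝ → ℝ → ℝ, IsKL β ∧ ∀ ξ₁ ∈ box, ∀ ξ₂ ∈ box, ∀ t ≥ (0 : ℝ),
        onenorm (φ t ξ₁ - φ t ξ₂) ≤ β (onenorm (ξ₁ - ξ₂)) t) ↔
    (∃ β : ℝ → ℝ → ℝ, IsKL β ∧ ∀ ξ₁ ∈ box, ∀ ξ₂ ∈ box, ξ₁ ≤ ξ₂ → ∀ t ≥ (0 : ℝ),
        (∑ i, (φ t ξ₂ i - φ t ξ₁ i)) ≤ β (∑ i, (ξ₂ i - ξ₁ i)) t) := by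
  have hlip' (K) (hKbox : K ⊆ box) (hKc : IsCompact K) (T : ℝ) :
      ∃ L : ℝ≥0, ∀ t ∈ Set.Icc 0 T, LipschitzOnWith L (f t) K :=
    let ⟨L, hL⟩ := hlip K hKbox hKc
    ⟨L.toNNReal, fun t ht => .of_dist_le' (by simpa only [dist_eq_norm] using hL t ht.1)⟩
  exact exists_congr fun β => and_congr_right' <|
    stmt10_general (hbox ▸ isSublattice_setOf_forall_mem X) hlip' hK
      (fun ξ hξ => (hφ ξ hξ).imp_right fun h t ht => (h t ht).imp_right (·.hasDerivWithinAt)) β
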